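/- A function f : [0,1] → ℝ is uniformly continuous on [0,1] if and only if the composition f ∘ Φ : ({0,1,2})^ℕ → ℝ is uniformly continuous, i.e., there exists ω : ℕ → ℕ such that for all k and all α, β : ℕ → {0,1,2} with ᾱω(k) = β̄ω(k), one has |f(Φ(α)) − f(Φ(β))| ≤ 2^(−k). -/

import Mathlib

open Filter

/-- `triN s` : numbering of the nodes of the ternary tree:
`N(⟨⟩) = 1`, `N(s * ⟨i⟩) = 2 * N(s) + i - 1`. -/
def triN (s : List (Fin 3)) : ℕ := s.foldl (fun a i => 2 * a + i.val - 1) 1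

/-- Initial segment of length `n` of `α`. -/
def seg3 (α : ℕ → Fin 3) (n : ℕ) : List (Fin 3) := List.ofFn fun i : Fin n => α i

/-- `Phi α` is the limit of the Cauchy sequence `x_α^n = 2^(-(n+1)) * N(ᾱ n)`. -/
noncomputable def Phi (α : ℕ → Fin 3) : ℝ :=
  limUnder atTop fun n => (triN (seg3 α n) : ℝ) / 2 ^ (n + 1)

/-- `f : [0,1] → ℝ` is uniformly continuous on the unit interval, with a modulus `ω`. -/
def UnifContOn (f : ℝ → ℝ) : Prop :=
  ∃ ω : ℕ → ℕ, ∀ k : ℕ, ∀ x ∈ Set.Icc (0 : ℝ) 1, ∀ y ∈ Set.Icc (0 : ℝ) 1,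
    |x - y| ≤ 1 / 2 ^ ω k → |f x - f y| ≤ 1 / 2 ^ k

/-!
`Phi α = ∑ i, α i / 2 ^ (i + 2)`, so a digit `d` followed by the sequence `u` has value
`d / 4 + Phi u / 2`. Sequences agreeing up to `n` therefore have values within `2⁻ⁿ`, which is the
forward direction. For the converse, the first digits `0`, `1`, `2` select the intervals `[0, 1/2]`,
`[1/4, 3/4]`, `[1/2, 1]`, which overlap enough that any two points at distance at most `1/4` lie in
a common one. Rescaling that interval to `[0, 1]` and iterating, points at distance at most
`2⁻⁽ⁿ⁺¹⁾` have representations with the same first `n` digits.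
-/

lemma seg3_succ (α : ℕ → Fin 3) (n : ℕ) : seg3 α (n + 1) = seg3 α n ++ [α n] :=
  List.ofFn_succ_last

lemma seg3_eq_seg3_iff {α β : ℕ → Fin 3} {n : ℕ} :
    seg3 α n = seg3 β n ↔ ∀ i < n, α i = β i := by
  rw [seg3, seg3, List.ofFn_inj, funext_iff, Fin.forall_iff]

lemma triN_append_singleton (s : List (Fin 3)) (i : Fin 3) :
    triN (s ++ [i]) = 2 * triN s + i - 1 := by
  simp [triN]

lemma triN_pos (s : List (Fin 3)) : 0 < triN s := by
  induction s using List.reverseRecOn with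
  | nil => simp [triN]
  | append_singleton s i ih => rw [triN_append_singleton]; omega

/-- The `i`-th term of the series for `Phi α`. The recursion for `triN` directly gives
`Phi α = 1 / 2 + ∑ i, (α i - 1) / 2 ^ (i + 2)`; as `∑ i, 1 / 2 ^ (i + 2) = 1 / 2`, the offsets
cancel and the digit enters unshifted. -/
noncomputable def digitTerm (α : ℕ → Fin 3) (i : ℕ) : ℝ := (α i : ℝ) / 2 ^ (i + 2)

lemma digitTerm_nonneg (α : ℕ → Fin 3) (i : ℕ) : 0 ≤ digitTerm α i := by
  unfold digitTerm
  positivity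

lemma digitTerm_le (α : ℕ → Fin 3) (i : ℕ) : digitTerm α i ≤ 1 / 2 / 2 ^ i := by
  have digit_le_two : ((α i : ℕ) : ℝ) ≤ 2 := by exact_mod_cast Fin.is_le (α i)
  calc digitTerm α i ≤ 2 / 2 ^ (i + 2) := by unfold digitTerm; gcongr
    _ = 1 / 2 / 2 ^ i := by rw [pow_add]; field_simp

lemma digitTerm_add (α : ℕ → Fin 3) (i n : ℕ) :
    digitTerm α (i + n) = digitTerm (fun j ↦ α (j + n)) i / 2 ^ n := by
  rw [digitTerm, digitTerm, div_div, ← pow_add, add_right_comm]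

lemma summable_digitTerm (α : ℕ → Fin 3) : Summable (digitTerm α) :=
  .of_nonneg_of_le (digitTerm_nonneg α) (digitTerm_le α) (summable_geometric_two' 1)

lemma triN_seg3_div_two_pow (α : ℕ → Fin 3) (n : ℕ) :
    (triN (seg3 α n) : ℝ) / 2 ^ (n + 1) =
      ∑ i ∈ Finset.range n, digitTerm α i + 1 / 2 ^ (n + 1) := by
  induction n with
  | zero => simp [seg3, triN]
  | succ n ih =>
    have one_le : 1 ≤ 2 * triN (seg3 α n) + α n := by linarith [triN_pos (seg3 α n)]
    rw [Finset.sum_range_succ, eq_sub_of_add_eq ih.symm, seg3_succ, triN_append_singleton,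
      Nat.cast_sub one_le, digitTerm]
    push_cast
    field_simp
    ring

lemma phi_eq_tsum (α : ℕ → Fin 3) : Phi α = ∑' i, digitTerm α i := by
  have tendsto_error : Tendsto (fun n : ℕ ↦ 1 / (2 : ℝ) ^ (n + 1)) atTop (nhds 0) :=
    tendsto_const_nhds.div_atTop
      ((tendsto_pow_atTop_atTop_of_one_lt one_lt_two).comp (tendsto_add_atTop_nat 1))
  refine Tendsto.limUnder_eq ?_
  simp_rw [triN_seg3_div_two_pow]
  simpa only [add_zero] using (summable_digitTerm α).tendsto_sum_tsum_nat.add tendsto_error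

lemma phi_mem_Icc (α : ℕ → Fin 3) : Phi α ∈ Set.Icc (0 : ℝ) 1 := by
  rw [phi_eq_tsum]
  exact ⟨tsum_nonneg (digitTerm_nonneg α),
    hasSum_le (digitTerm_le α) (summable_digitTerm α).hasSum (hasSum_geometric_two' 1)⟩

lemma phi_eq_sum_add_phi_shift (α : ℕ → Fin 3) (n : ℕ) :
    Phi α = ∑ i ∈ Finset.range n, digitTerm α i + Phi (fun i ↦ α (i + n)) / 2 ^ n := by
  simp_rw [phi_eq_tsum, ← (summable_digitTerm α).sum_add_tsum_nat_add n, digitTerm_add,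
    tsum_div_const]

lemma abs_phi_sub_phi_le {α β : ℕ → Fin 3} {n : ℕ} (h : ∀ i < n, α i = β i) :
    |Phi α - Phi β| ≤ 1 / 2 ^ n := by
  have sum_eq : ∑ i ∈ Finset.range n, digitTerm α i = ∑ i ∈ Finset.range n, digitTerm β i :=
    Finset.sum_congr rfl fun i hi ↦ by rw [digitTerm, digitTerm, h i (Finset.mem_range.mp hi)]
  have tails_le_one : |Phi (fun i ↦ α (i + n)) - Phi (fun i ↦ β (i + n))| ≤ 1 :=
    Real.dist_le_of_mem_Icc_01 (phi_mem_Icc _) (phi_mem_Icc _)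
  rw [phi_eq_sum_add_phi_shift α n, phi_eq_sum_add_phi_shift β n, sum_eq, add_sub_add_left_eq_sub,
    ← sub_div, abs_div, abs_of_pos (by positivity : (0 : ℝ) < 2 ^ n)]
  gcongr

/-- The infinite sequence with first term `a` followed by the terms of `u`; for digit sequences it
is the branch of the tree that starts with `a` and then follows `u`. -/
def consSeq {X : Type*} (a : X) (u : ℕ → X) : ℕ → X
  | 0 => a
  | n + 1 => u n

lemma consSeq_eq_of_lt_succ {X : Type*} (a : X) {u v : ℕ → X} {n : ℕ} (h : ∀ i < n, u i = v i) :
    ∀ i < n + 1, consSeq a u i = consSeq a v i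
  | 0, _ => rfl
  | i + 1, hi => h i (Nat.lt_of_succ_lt_succ hi)

lemma phi_consSeq (d : Fin 3) (α : ℕ → Fin 3) : Phi (consSeq d α) = d / 4 + Phi α / 2 := by
  rw [phi_eq_sum_add_phi_shift _ 1, Finset.sum_range_one, digitTerm]
  norm_num [consSeq]

lemma exists_phi_eq {x : ℝ} (hx : x ∈ Set.Icc (0 : ℝ) 1) : ∃ α, Phi α = x := by
  obtain ⟨bits, -, rfl⟩ := Real.ofDigits_SurjOn one_lt_two hx
  refine ⟨fun n ↦ ⟨2 * bits n, by omega⟩, ?_⟩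
  rw [phi_eq_tsum, Real.ofDigits]
  congr! 2 with n
  rw [digitTerm, Real.ofDigitsTerm]
  push_cast
  field_simp
  ring

lemma exists_common_digit {x y : ℝ} (hx : x ∈ Set.Icc (0 : ℝ) 1) (hy : y ∈ Set.Icc (0 : ℝ) 1)
    (hxy : |x - y| ≤ 1 / 4) :
    ∃ d : Fin 3, 2 * x - d / 2 ∈ Set.Icc (0 : ℝ) 1 ∧ 2 * y - d / 2 ∈ Set.Icc (0 : ℝ) 1 := by
  wlog hle : x ≤ y generalizing x y
  · simpa only [and_comm] using this hy hx (abs_sub_comm x y ▸ hxy) (le_of_not_ge hle)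
  simp only [Set.mem_Icc] at hx hy ⊢
  have y_le_add : y ≤ x + 1 / 4 := by linarith [(abs_le.mp hxy).1]
  rcases le_total y (1 / 2) with y_le | le_y
  · exact ⟨0, by simp only [Fin.val_zero, Nat.cast_zero]; grind⟩
  rcases le_total (1 / 2) x with le_x | x_le
  · exact ⟨2, by simp only [Fin.val_two, Nat.cast_ofNat]; grind⟩
  · exact ⟨1, by simp only [Fin.val_one, Nat.cast_one]; grind⟩

lemma exists_common_first_digits (n : ℕ) {x y : ℝ} (hx : x ∈ Set.Icc (0 : ℝ) 1)
    (hy : y ∈ Set.Icc (0 : ℝ) 1) (hxy : |x - y| ≤ 1 / 2 ^ (n + 1)) :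
    ∃ α β, (∀ i < n, α i = β i) ∧ Phi α = x ∧ Phi β = y := by
  induction n generalizing x y with
  | zero =>
    obtain ⟨α, hα⟩ := exists_phi_eq hx
    obtain ⟨β, hβ⟩ := exists_phi_eq hy
    exact ⟨α, β, by simp, hα, hβ⟩
  | succ n ih =>
    have dist_le_quarter : |x - y| ≤ 1 / 4 :=
      calc |x - y| ≤ 1 / 2 ^ (n + 2) := hxy
        _ ≤ 1 / 2 ^ 2 := by gcongr <;> norm_num
        _ = 1 / 4 := by norm_num
    obtain ⟨d, hdx, hdy⟩ := exists_common_digit hx hy dist_le_quarter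
    have dist_rescaled : |(2 * x - d / 2) - (2 * y - d / 2)| ≤ 1 / 2 ^ (n + 1) :=
      calc |(2 * x - d / 2) - (2 * y - d / 2)| = 2 * |x - y| := by
            rw [sub_sub_sub_cancel_right, ← mul_sub, abs_mul, abs_two]
        _ ≤ 2 * (1 / 2 ^ (n + 2)) := by gcongr
        _ = 1 / 2 ^ (n + 1) := by field_simp; ring
    obtain ⟨α, β, hαβ, hα, hβ⟩ := ih hdx hdy dist_rescaled
    refine ⟨consSeq d α, consSeq d β, consSeq_eq_of_lt_succ d hαβ, ?_, ?_⟩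
    · rw [phi_consSeq, hα]; ring
    · rw [phi_consSeq, hβ]; ring

theorem stmt9_general {E : Type*} [PseudoMetricSpace E] (f : ℝ → E) :
    (∃ ω : ℕ → ℕ, ∀ k : ℕ, ∀ x ∈ Set.Icc (0 : ℝ) 1, ∀ y ∈ Set.Icc (0 : ℝ) 1,
        |x - y| ≤ 1 / 2 ^ ω k → dist (f x) (f y) ≤ 1 / 2 ^ k) ↔
      ∃ ω : ℕ → ℕ, ∀ (k : ℕ) (α β : ℕ → Fin 3),
        seg3 α (ω k) = seg3 β (ω k) → dist (f (Phi α)) (f (Phi β)) ≤ 1 / 2 ^ k := by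
  constructor
  · rintro ⟨ω, hω⟩
    exact ⟨ω, fun k α β hαβ ↦ hω k _ (phi_mem_Icc α) _ (phi_mem_Icc β)
      (abs_phi_sub_phi_le (seg3_eq_seg3_iff.mp hαβ))⟩
  · rintro ⟨ω, hω⟩
    refine ⟨fun k ↦ ω k + 1, fun k x hx y hy hxy ↦ ?_⟩
    obtain ⟨α, β, hαβ, rfl, rfl⟩ := exists_common_first_digits (ω k) hx hy hxy
    exact hω k α β (seg3_eq_seg3_iff.mpr hαβ)

theorem stmt9 (f : ℝ → ℝ) :
    UnifContOn f ↔
      ∃ ω : ℕ → ℕ, ∀ (k : ℕ) (α β : ℕ → Fin 3),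
        seg3 α (ω k) = seg3 β (ω k) → |f (Phi α) - f (Phi β)| ≤ 1 / 2 ^ k :=
  stmt9_general f
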